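/- Let δ ∈ (0,1] and let n11, n12, n21, n22 be nonnegative integers with min{n11,n22} ≥ max{n12,n21}. Let R̄11P, R̄11C, R̄12, R̄21, R̄22P, R̄22C be nonnegative integers such that: (a) R̄11C + max{R̄21,R̄22C} + R̄12 + R̄11P ≤ n11 − log₂(32/δ); (b) if max{R̄21,R̄22C} > 0 then max{R̄21,R̄22C} + R̄12 + R̄11P ≤ n12 − log₂(32/δ); (c) if R̄12 > 0 then R̄12 + R̄11P ≤ n12 + n21 − n22; (d) R̄22C + max{R̄12,R̄11C} + R̄21 + R̄22P ≤ n22 − log₂(32/δ); (e) if max{R̄12,R̄11C} > 0 then max{R̄12,R̄11C} + R̄21 + R̄22P ≤ n21 − log₂(32/δ); (f) if R̄21 > 0 then R̄21 + R̄22P ≤ n12 + n21 − n11. Call a triple (a,b,c) ∈ (𝔽₂^{n11})³ admissible for receiver one if a_i = 0 unless i ∈ {1,…,R̄11C} ∪ {n11−R̄11P+1,…,n11}, b_i = 0 unless n11−(n12+n21−n22)+1 ≤ i ≤ n11−(n12+n21−n22)+R̄12, and c_i = 0 unless n11−n12+1 ≤ i ≤ n11−n12+max{R̄21,R̄22C};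 call a triple (a′,b′,c′) ∈ (𝔽₂^{n22})³ admissible for receiver two if a′_i = 0 unless i ∈ {1,…,R̄22C} ∪ {n22−R̄22P+1,…,n22}, b′_i = 0 unless n22−(n12+n21−n11)+1 ≤ i ≤ n22−(n12+n21−n11)+R̄21, and c′_i = 0 unless n22−n21+1 ≤ i ≤ n22−n21+max{R̄12,R̄11C}. Then there is a set B ⊆ (1,2]⁶ with μ(B) ≤ δ such that for every (g10,g11,g12,g20,g21,g22) ∈ (1,2]⁶ ∖ B: the only triple admissible for receiver one with Ḡ(g11)·a + Ḡ(g12)·b + Ḡ(g10)·c = 0 (matrices of size n11×n11) is (0,0,0), and the only triple admissible for receiver two with Ḡ(g22)·a′ + Ḡ(g21)·b′ + Ḡ(g20)·c′ = 0 (matrices of size n22×n22) is (0,0,0). -/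

import Mathlib

/-!
The proof is a union bound over nonzero admissible triples, organised by first nonzero index.

*One triple.* If `a` has first nonzero entry at `v`, then the rows `v, v+1, …, n-1` of
`Gmat n x *ᵥ a = r` determine the digits `0, …, n-1-v` of `x` successively, so for `x ∈ (1,2)` the
solutions lie in one dyadic interval of length `2^{-(n-1-v)}` (`gainMeasure_slice_le`). By Fubini,
a triple in which `a` or `b` starts at `v` satisfies the decoding equation with probability at most
`2^{-(n-1-v)}` (`badEvent_le`).

*Counting.* Every gain in `(1,2)` has digit `0` equal to `1`, so row `v` of the equation, where `v`
is the first index at which `a`, `b`, `c` do not all vanish, reads `a v + b v + c v = 0`. Hence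
exactly two of the three vectors start at `v`, and `v` lies in two of the three supports. If `N` is
the total number of support positions beyond `v`, there are `2^N` such triples for each pair of
vectors. The rate constraints yield `2^N * 2^{-(n-1-v)} ≤ (δ/32) * 2^{-(v+1-s)}`, with `s` the later
of the starting points of the two supports: each further step to the right inside the overlap of
two supports costs two free positions and gains only one digit of probability. Summing the
geometric series over `v` gives at most `δ/32` for each pair (`pattern_le`), so at most
`3δ/32 ≤ δ/2` for each receiver (`receiver`). The null set of gains equal to `2`, whose digit `0`
vanishes, is added to the outage set.
-/

open MeasureTheory Matrix

/-- The `j`-th binary digit of a real number `g`, viewed in `𝔽₂`: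
`[g]_j = ⌊2^j g⌋ − 2⌊2^{j−1} g⌋`. -/
noncomputable def binDigit (g : ℝ) (j : ℕ) : ZMod 2 :=
  ((⌊(2:ℝ) ^ (j : ℤ) * g⌋ - 2 * ⌊(2:ℝ) ^ ((j : ℤ) - 1) * g⌋ : ℤ) : ZMod 2)

/-- The `n × n` lower-triangular Toeplitz matrix over `𝔽₂` whose `(i,j)` entry
equals `[g]_{i−j}` for `j ≤ i` and `0` for `i < j`. -/
noncomputable def Gmat (n : ℕ) (g : ℝ) : Matrix (Fin n) (Fin n) (ZMod 2) :=
  fun i j => if (j : ℕ) ≤ (i : ℕ) then binDigit g ((i : ℕ) - (j : ℕ)) else 0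

/-! ### Slices of product measures and the gain distribution -/

/-- The uniform distribution of a single channel gain on `(1,2]`. -/
noncomputable def gainMeasure : Measure ℝ := volume.restrict (Set.Ioc 1 2)

instance : IsProbabilityMeasure gainMeasure := ⟨by
  simp [gainMeasure]; norm_num⟩

/-- The law of three independent uniform gains. At a receiver they are ordered `(g_c, g_a, g_b)`:
the gain multiplying `c` comes first, as in the order `(g10, g11, g12)`. -/
noncomputable def gainMeasure₃ : Measure (ℝ × ℝ × ℝ) :=
  gainMeasure.prod (gainMeasure.prod gainMeasure)

instance : IsProbabilityMeasure gainMeasure₃ := by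
  unfold gainMeasure₃; infer_instance

/-- A set all of whose slices at a fixed first coordinate have measure at most `ε` has measure at
most `ε` in the product with a probability measure. -/
lemma prod_le_of_slice {α β : Type*} [MeasurableSpace α] [MeasurableSpace β]
    (μ : Measure α) (τ : Measure β) [IsProbabilityMeasure μ] [SFinite τ]
    {S : Set (α × β)} (hS : MeasurableSet S) {ε : ENNReal}
    (h : ∀ x, τ (Prod.mk x ⁻¹' S) ≤ ε) : (μ.prod τ) S ≤ ε := by
  rw [Measure.prod_apply hS]
  calc _ ≤ ∫⁻ _, ε ∂μ := lintegral_mono h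
    _ = ε := by simp

/-- The counterpart of `prod_le_of_slice` for slices at a fixed second coordinate. -/
lemma prod_le_of_slice' {α β : Type*} [MeasurableSpace α] [MeasurableSpace β]
    (μ : Measure α) (τ : Measure β) [SFinite μ] [IsProbabilityMeasure τ]
    {S : Set (α × β)} (hS : MeasurableSet S) {ε : ENNReal}
    (h : ∀ y, μ ((fun x => (x, y)) ⁻¹' S) ≤ ε) : (μ.prod τ) S ≤ ε := by
  rw [Measure.prod_apply_symm hS]
  calc _ ≤ ∫⁻ _, ε ∂τ := lintegral_mono h
    _ = ε := by simp

/-! ### Digits and a single Toeplitz equation -/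

/-- Two numbers in `(1,2)` whose digits `0, …, m` agree lie in the same dyadic interval of length
`2^{-m}`. -/
lemma floor_eq_of_binDigit_eq {x y : ℝ} (hx : x ∈ Set.Ioo (1:ℝ) 2) (hy : y ∈ Set.Ioo (1:ℝ) 2)
    (m : ℕ) (h : ∀ k ≤ m, binDigit x k = binDigit y k) :
    ⌊(2:ℝ) ^ m * x⌋ = ⌊(2:ℝ) ^ m * y⌋ := by
  induction m with
  | zero =>
    have e : ∀ z ∈ Set.Ioo (1:ℝ) 2, ⌊(2:ℝ) ^ 0 * z⌋ = 1 := by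
      intro z hz
      rw [Int.floor_eq_iff]
      have := hz.1; have := hz.2
      constructor <;> push_cast <;> linarith
    rw [e x hx, e y hy]
  | succ m ih =>
    have ih := ih (fun k hk => h k (by omega))
    have hd := h (m + 1) le_rfl
    -- Doubling a real leaves the floor within `{0, 1}` of twice the old floor.
    have step : ∀ z : ℝ, ⌊(2:ℝ) ^ (m + 1) * z⌋ = 2 * ⌊(2:ℝ) ^ m * z⌋ ∨
        ⌊(2:ℝ) ^ (m + 1) * z⌋ = 2 * ⌊(2:ℝ) ^ m * z⌋ + 1 := by
      intro z
      have h1 := Int.floor_le ((2:ℝ) ^ m * z)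
      have h2 := Int.lt_floor_add_one ((2:ℝ) ^ m * z)
      have h3 : 2 * ⌊(2:ℝ) ^ m * z⌋ ≤ ⌊(2:ℝ) ^ (m + 1) * z⌋ := by
        rw [Int.le_floor]; push_cast; rw [pow_succ]; linarith
      have h4 : ⌊(2:ℝ) ^ (m + 1) * z⌋ < 2 * ⌊(2:ℝ) ^ m * z⌋ + 2 := by
        rw [Int.floor_lt]; push_cast; rw [pow_succ]; linarith
      omega
    have e : ∀ z : ℝ, binDigit z (m + 1) =
        ((⌊(2:ℝ) ^ (m + 1) * z⌋ - 2 * ⌊(2:ℝ) ^ m * z⌋ : ℤ) : ZMod 2) := by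
      intro z
      have : (((m + 1 : ℕ) : ℤ) - 1) = (m : ℤ) := by push_cast; ring
      rw [binDigit, this, zpow_natCast, zpow_natCast]
    rw [e, e, ih, ZMod.intCast_eq_intCast_iff_dvd_sub] at hd
    have hx := step x
    have hy := step y
    rw [ih] at hx
    push_cast at hd
    omega

lemma binDigit_zero {x : ℝ} (hx : x ∈ Set.Ioo (1:ℝ) 2) : binDigit x 0 = 1 := by
  have h1 := hx.1
  have h2 := hx.2
  have e1 : ⌊(2:ℝ) ^ ((0:ℕ) : ℤ) * x⌋ = 1 := by
    rw [Int.floor_eq_iff]; constructor <;> simp <;> linarith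
  have e2 : ⌊(2:ℝ) ^ (((0:ℕ) : ℤ) - 1) * x⌋ = 0 := by
    rw [Int.floor_eq_iff]; constructor <;> norm_num <;> linarith
  rw [binDigit, e1, e2]; norm_num

/-- Row `i` of `Gmat n x *ᵥ a` when `a` vanishes before `v`: the last digit involved, `i - v`, is
multiplied by `a v`, and the remaining terms involve earlier digits only. -/
lemma Gmat_mulVec_split {n : ℕ} (x : ℝ) {a : Fin n → ZMod 2} {v i : Fin n} (hvi : v ≤ i)
    (hlt : ∀ j < v, a j = 0) :
    (Gmat n x *ᵥ a) i = binDigit x (i - v) * a v +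
      ∑ j ∈ Finset.Ioc v i, binDigit x (i - j) * a j := by
  have hs : (Gmat n x *ᵥ a) i = ∑ j ∈ Finset.Icc v i, binDigit x (i - j) * a j := by
    rw [Matrix.mulVec, dotProduct, ← Finset.sum_subset (Finset.subset_univ (Finset.Icc v i))]
    · refine Finset.sum_congr rfl fun j hj => ?_
      have := (Finset.mem_Icc.1 hj).2
      rw [Gmat, if_pos (by exact_mod_cast this)]
    · intro j _ hj
      rw [Finset.mem_Icc, not_and_or, not_le, not_le] at hj
      rcases hj with hj | hj
      · rw [hlt j hj, mul_zero]
      · rw [Gmat, if_neg (by have : (i:ℕ) < j := hj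
                             omega), zero_mul]
  rw [hs, ← Finset.Ioc_insert_left hvi, Finset.sum_insert (by simp)]

/-- If `a` starts at `v`, the product `Gmat n x *ᵥ a` determines the digits `0, …, n-1-v` of `x`,
by forward substitution. -/
lemma binDigit_eq_of_mulVec_eq {n : ℕ} {x y : ℝ} {a : Fin n → ZMod 2} {v : Fin n}
    (hv : a v = 1) (hlt : ∀ j < v, a j = 0) (h : Gmat n x *ᵥ a = Gmat n y *ᵥ a)
    (k : ℕ) (hk : k ≤ n - 1 - v) : binDigit x k = binDigit y k := by
  induction k using Nat.strong_induction_on with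
  | _ k ih =>
    have hvn := v.2
    let i : Fin n := ⟨v + k, by omega⟩
    have hvi : v ≤ i := by simp [i, Fin.le_def]
    have hi := congrFun h i
    rw [Gmat_mulVec_split x hvi hlt, Gmat_mulVec_split y hvi hlt, hv] at hi
    have hsum : ∑ j ∈ Finset.Ioc v i, binDigit x (i - j) * a j =
        ∑ j ∈ Finset.Ioc v i, binDigit y (i - j) * a j := by
      refine Finset.sum_congr rfl fun j hj => ?_
      have h1 : (v : ℕ) < j := (Finset.mem_Ioc.1 hj).1
      have h3 : (j : ℕ) ≤ i := (Finset.mem_Ioc.1 hj).2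
      have h2 : (i : ℕ) = v + k := rfl
      rw [ih (i - j) (by omega) (by omega)]
    have h2 : (i : ℕ) - v = k := by simp [i]
    rw [hsum, h2] at hi
    simpa using hi

/-- For `a` starting at `v`, a random gain solves `Gmat n x *ᵥ a = r` with probability at most
`2^{-(n-1-v)}`. -/
lemma gainMeasure_slice_le {n : ℕ} {a : Fin n → ZMod 2} {v : Fin n}
    (hv : a v = 1) (hlt : ∀ j < v, a j = 0) (r : Fin n → ZMod 2) :
    gainMeasure {x | Gmat n x *ᵥ a = r} ≤ ENNReal.ofReal ((1 / 2) ^ (n - 1 - (v : ℕ))) := by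
  set m := n - 1 - (v : ℕ)
  have hI : gainMeasure = volume.restrict (Set.Ioo 1 2) := Measure.restrict_congr_set Ioo_ae_eq_Ioc.symm
  rw [hI, Measure.restrict_apply' measurableSet_Ioo]
  rcases Set.eq_empty_or_nonempty ({x | Gmat n x *ᵥ a = r} ∩ Set.Ioo (1:ℝ) 2) with he | ⟨y, hy, hyI⟩
  · simp [he]
  have hp : (0:ℝ) < 2 ^ m := by positivity
  refine (measure_mono (t := Set.Ico ((⌊(2:ℝ) ^ m * y⌋ : ℝ) / 2 ^ m)
    ((⌊(2:ℝ) ^ m * y⌋ + 1 : ℝ) / 2 ^ m)) ?_).trans ?_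
  · rintro x ⟨hx, hxI⟩
    have hf := floor_eq_of_binDigit_eq hxI hyI m fun k hk =>
      binDigit_eq_of_mulVec_eq hv hlt (hx.trans hy.symm) k hk
    rw [← hf, Set.mem_Ico, div_le_iff₀ hp, lt_div_iff₀ hp, mul_comm x]
    exact ⟨Int.floor_le _, Int.lt_floor_add_one _⟩
  · rw [Real.volume_Ico]
    apply ENNReal.ofReal_le_ofReal
    rw [← sub_div, one_div, inv_pow]
    simp

/-- The gains `(g_c, g_a, g_b)` for which the triple `q = (a, b, c)` solves the homogeneous decoding
system. -/
def badEvent {n : ℕ} (q : (Fin n → ZMod 2) × (Fin n → ZMod 2) × (Fin n → ZMod 2)) :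
    Set (ℝ × ℝ × ℝ) :=
  {t | Gmat n t.2.1 *ᵥ q.1 + Gmat n t.2.2 *ᵥ q.2.1 + Gmat n t.1 *ᵥ q.2.2 = 0}

lemma measurableSet_badEvent {n : ℕ}
    (q : (Fin n → ZMod 2) × (Fin n → ZMod 2) × (Fin n → ZMod 2)) :
    MeasurableSet (badEvent q) := by
  let _ : MeasurableSpace (ZMod 2) := ⊤
  have : DiscreteMeasurableSpace (ZMod 2) := ⟨fun _ => trivial⟩
  have hd : ∀ j, Measurable fun g : ℝ => binDigit g j := by
    intro j
    have : Measurable fun g : ℝ => (⌊(2:ℝ) ^ (j : ℤ) * g⌋ - 2 * ⌊(2:ℝ) ^ ((j : ℤ) - 1) * g⌋ : ℤ) :=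
      (Int.measurable_floor.comp (measurable_const_mul _)).sub
        ((Int.measurable_floor.comp (measurable_const_mul _)).const_mul 2)
    exact (Measurable.of_discrete (f := fun k : ℤ => (k : ZMod 2))).comp this
  have hG : ∀ a : Fin n → ZMod 2, ∀ i, Measurable fun g : ℝ => (Gmat n g *ᵥ a) i := by
    intro a i
    simp only [Matrix.mulVec, dotProduct]
    refine Finset.measurable_sum _ fun j _ => ?_
    refine (Measurable.of_discrete (f := fun z : ZMod 2 => z * a j)).comp ?_
    unfold Gmat
    split_ifs
    · exact hd _
    · exact measurable_const
  have : badEvent q = ⋂ i, {t | (Gmat n t.2.1 *ᵥ q.1) i + (Gmat n t.2.2 *ᵥ q.2.1) i +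
      (Gmat n t.1 *ᵥ q.2.2) i = 0} := by
    ext t
    simp [badEvent, funext_iff]
  rw [this]
  refine MeasurableSet.iInter fun i => ?_
  have hm : Measurable fun t : ℝ × ℝ × ℝ => (Gmat n t.2.1 *ᵥ q.1) i + (Gmat n t.2.2 *ᵥ q.2.1) i +
      (Gmat n t.1 *ᵥ q.2.2) i :=
    (((hG q.1 i).comp (measurable_fst.comp measurable_snd)).add
      ((hG q.2.1 i).comp (measurable_snd.comp measurable_snd))).add
      ((hG q.2.2 i).comp measurable_fst)
  exact hm (measurableSet_singleton 0)

/-- Only `a` and `b` are considered as the vector starting at `v`: of any two of the three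
vectors, at least one is `a` or `b`. -/
lemma badEvent_le {n : ℕ} {q : (Fin n → ZMod 2) × (Fin n → ZMod 2) × (Fin n → ZMod 2)}
    {v : Fin n} (h : (q.1 v = 1 ∧ ∀ j < v, q.1 j = 0) ∨ (q.2.1 v = 1 ∧ ∀ j < v, q.2.1 j = 0)) :
    gainMeasure₃ (badEvent q) ≤ ENNReal.ofReal ((1 / 2) ^ (n - 1 - (v : ℕ))) := by
  have hS := measurableSet_badEvent q
  refine prod_le_of_slice _ _ hS fun z => ?_
  have hS' : MeasurableSet (Prod.mk z ⁻¹' badEvent q) := measurable_prodMk_left hS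
  rcases h with ⟨hv, hlt⟩ | ⟨hv, hlt⟩
  · refine prod_le_of_slice' _ _ hS' fun y => ?_
    refine (measure_mono fun x hx => ?_).trans (gainMeasure_slice_le hv hlt
      (-(Gmat n y *ᵥ q.2.1 + Gmat n z *ᵥ q.2.2)))
    rw [Set.mem_ofPred_eq, eq_neg_iff_add_eq_zero, ← add_assoc]
    exact hx
  · refine prod_le_of_slice _ _ hS' fun x => ?_
    refine (measure_mono fun y hy => ?_).trans (gainMeasure_slice_le hv hlt
      (-(Gmat n x *ᵥ q.1 + Gmat n z *ᵥ q.2.2)))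
    rw [Set.mem_ofPred_eq, eq_neg_iff_add_eq_zero, ← hy]
    abel

/-! ### Counting triples -/

/-- The vectors that vanish before `v`, take the value `t` at `v`, and after `v` are supported
in `A`. -/
def leadVec {n : ℕ} (A : Fin n → Prop) [DecidablePred A] (v : Fin n) (t : ZMod 2) :
    Finset (Fin n → ZMod 2) :=
  Fintype.piFinset fun i => if v < i ∧ A i then Finset.univ else {if i = v then t else 0}

lemma card_leadVec {n : ℕ} (A : Fin n → Prop) [DecidablePred A] (v : Fin n) (t : ZMod 2) :
    (leadVec A v t).card = 2 ^ (Finset.univ.filter fun i => v < i ∧ A i).card := by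
  rw [leadVec, Fintype.card_piFinset, ← Finset.prod_const, Finset.prod_filter]
  refine Finset.prod_congr rfl fun i _ => ?_
  split_ifs <;> simp [ZMod.card]

lemma mem_leadVec {n : ℕ} {A : Fin n → Prop} [DecidablePred A] {v : Fin n}
    {a : Fin n → ZMod 2} (hA : ∀ i, ¬ A i → a i = 0) (hlt : ∀ j < v, a j = 0) :
    a ∈ leadVec A v (a v) := by
  rw [leadVec, Fintype.mem_piFinset]
  intro i
  split_ifs with h1 h2
  · simp
  · simp [h2]
  · rw [Finset.mem_singleton]
    rcases lt_trichotomy i v with h | h | h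
    · exact hlt i h
    · exact absurd h h2
    · exact hA i fun h' => h1 ⟨h, h'⟩

lemma lead_of_mem_leadVec {n : ℕ} {A : Fin n → Prop} [DecidablePred A] {v : Fin n} {t : ZMod 2}
    {a : Fin n → ZMod 2} (h : a ∈ leadVec A v t) : a v = t ∧ ∀ j < v, a j = 0 := by
  rw [leadVec, Fintype.mem_piFinset] at h
  refine ⟨by simpa using h v, fun j hj => ?_⟩
  simpa [hj.not_gt, hj.ne] using h j

/-- The geometric series over distinct indices `v ≥ s`. -/
lemma sum_half_pow_le {n : ℕ} (V : Finset (Fin n)) (s : ℕ) (hs : ∀ v ∈ V, s ≤ v) :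
    ∑ v ∈ V, (1 / 2 : ℝ) ^ ((v : ℕ) + 1 - s) ≤ 1 := by
  have hinj : Set.InjOn (fun v : Fin n => (v : ℕ) - s) V := by
    intro x hx y hy hxy
    have := hs x hx; have := hs y hy
    simp only at hxy
    exact Fin.ext (by omega)
  have e : ∀ m : ℕ, ∑ k ∈ Finset.range m, (1 / 2 : ℝ) ^ (k + 1) = 1 - (1 / 2) ^ m := by
    intro m
    induction m with
    | zero => simp
    | succ m ih => rw [Finset.sum_range_succ, ih]; ring
  calc ∑ v ∈ V, (1 / 2 : ℝ) ^ ((v : ℕ) + 1 - s)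
      = ∑ v ∈ V, (1 / 2 : ℝ) ^ (((v : ℕ) - s) + 1) := by
        refine Finset.sum_congr rfl fun v hv => ?_
        have := hs v hv
        congr 1; omega
    _ = ∑ k ∈ V.image fun v : Fin n => (v : ℕ) - s, (1 / 2 : ℝ) ^ (k + 1) := by
        rw [Finset.sum_image hinj]
    _ ≤ ∑ k ∈ Finset.range n, (1 / 2 : ℝ) ^ (k + 1) := by
        refine Finset.sum_le_sum_of_subset_of_nonneg ?_ fun _ _ _ => by positivity
        intro k hk
        obtain ⟨v, _, rfl⟩ := Finset.mem_image.1 hk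
        have := v.2
        simp only [Finset.mem_range]; omega
    _ ≤ 1 := by rw [e]; simp

/-- Union bound for one pattern of leading vectors. For each possible leading index `v ∈ V`, `F v`
is a set of triples starting at `v`, of cardinality `2 ^ N`. The bound `N + 2 * (v + 1) ≤ K + s`,
with `K` controlled by the rates, makes the `v`-th contribution at most
`(δ/32) * 2^{-(v+1-s)}`. -/
lemma pattern_le {n : ℕ} {δ : ℝ} (hδ : 0 ≤ δ) (V : Finset (Fin n)) (s : ℕ)
    (F : Fin n → Finset ((Fin n → ZMod 2) × (Fin n → ZMod 2) × (Fin n → ZMod 2)))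
    (hlead : ∀ v ∈ V, ∀ q ∈ F v,
      (q.1 v = 1 ∧ ∀ j < v, q.1 j = 0) ∨ (q.2.1 v = 1 ∧ ∀ j < v, q.2.1 j = 0))
    (hF : ∀ v ∈ V, s ≤ (v : ℕ) ∧ ∃ N, (F v).card = 2 ^ N ∧
      ∃ K : ℕ, (2:ℝ) ^ K * 32 ≤ δ * 2 ^ n ∧ N + 2 * ((v : ℕ) + 1) ≤ K + s) :
    gainMeasure₃ (⋃ v ∈ V, ⋃ q ∈ F v, badEvent q) ≤ ENNReal.ofReal (δ / 32) := by
  have key : ∀ v ∈ V, gainMeasure₃ (⋃ q ∈ F v, badEvent q) ≤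
      ENNReal.ofReal (δ / 32 * (1 / 2) ^ ((v : ℕ) + 1 - s)) := by
    intro v hv
    obtain ⟨hsv, N, hN, K, hK, hNK⟩ := hF v hv
    have hvn := v.2
    calc gainMeasure₃ (⋃ q ∈ F v, badEvent q)
        ≤ ∑ q ∈ F v, gainMeasure₃ (badEvent q) := measure_biUnion_finset_le _ _
      _ ≤ ∑ q ∈ F v, ENNReal.ofReal ((1 / 2) ^ (n - 1 - (v : ℕ))) :=
          Finset.sum_le_sum fun q hq => badEvent_le (hlead v hv q hq)
      _ = ENNReal.ofReal (2 ^ N * (1 / 2) ^ (n - 1 - (v : ℕ))) := by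
          rw [Finset.sum_const, hN, nsmul_eq_mul, ENNReal.ofReal_mul (by positivity),
            ENNReal.ofReal_pow (by norm_num : (0:ℝ) ≤ 2)]
          simp
      _ ≤ _ := by
          apply ENNReal.ofReal_le_ofReal
          have h1 : (2:ℝ) ^ n = 2 ^ (n - 1 - (v : ℕ)) * 2 ^ ((v : ℕ) + 1) := by
            rw [← pow_add]; congr 1; omega
          have h2 : (2:ℝ) ^ ((v : ℕ) + 1) = 2 ^ ((v : ℕ) + 1 - s) * 2 ^ s := by
            rw [← pow_add]; congr 1; omega
          have h3 : (2:ℝ) ^ (N + 2 * ((v : ℕ) + 1)) ≤ 2 ^ (K + s) :=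
            pow_le_pow_right₀ (by norm_num) hNK
          rw [pow_add, pow_add, two_mul, pow_add] at h3
          rw [_root_.one_div_pow, _root_.one_div_pow, mul_one_div, mul_one_div,
            div_le_div_iff₀ (by positivity) (by positivity)]
          rw [h1] at hK
          have hs : (0:ℝ) < 2 ^ s := by positivity
          have hv' : (0:ℝ) < 2 ^ ((v : ℕ) + 1) := by positivity
          -- Multiply the claim by `2 ^ s * 2 ^ (v + 1)` to clear the truncated exponents.
          refine le_of_mul_le_mul_right ?_ (mul_pos hs hv')
          calc (2:ℝ) ^ N * 2 ^ ((v : ℕ) + 1 - s) * (2 ^ s * 2 ^ ((v : ℕ) + 1))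
              = 2 ^ N * ((2 ^ ((v : ℕ) + 1 - s) * 2 ^ s) * 2 ^ ((v : ℕ) + 1)) := by ring
            _ = 2 ^ N * (2 ^ ((v : ℕ) + 1) * 2 ^ ((v : ℕ) + 1)) := by rw [← h2]
            _ ≤ 2 ^ K * 2 ^ s := h3
            _ ≤ _ := by nlinarith
  calc _ ≤ ∑ v ∈ V, gainMeasure₃ (⋃ q ∈ F v, badEvent q) := measure_biUnion_finset_le _ _
    _ ≤ ∑ v ∈ V, ENNReal.ofReal (δ / 32 * (1 / 2) ^ ((v : ℕ) + 1 - s)) := Finset.sum_le_sum key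
    _ = ENNReal.ofReal (δ / 32 * ∑ v ∈ V, (1 / 2) ^ ((v : ℕ) + 1 - s)) := by
        rw [← ENNReal.ofReal_sum_of_nonneg fun _ _ => by positivity, Finset.mul_sum]
    _ ≤ _ := by
        apply ENNReal.ofReal_le_ofReal
        exact mul_le_of_le_one_right (by positivity) (sum_half_pow_le V s fun v hv => (hF v hv).1)

lemma gainMeasure_singleton : gainMeasure {x | x = 2} = 0 := by
  refine le_antisymm ((Measure.restrict_apply_le _ _).trans ?_) zero_le
  simp

/-- Gains equal to `2`, whose digit `0` is `0` rather than `1`, are negligible. -/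
lemma gainMeasure₃_edge :
    gainMeasure₃ {t | t.1 = 2 ∨ t.2.1 = 2 ∨ t.2.2 = 2} = 0 := by
  have m1 : Measurable fun t : ℝ × ℝ × ℝ => t.1 := by fun_prop
  have m2 : Measurable fun t : ℝ × ℝ × ℝ => t.2.1 := by fun_prop
  have m3 : Measurable fun t : ℝ × ℝ × ℝ => t.2.2 := by fun_prop
  have h1 : gainMeasure₃ {t | t.1 = 2} ≤ 0 :=
    prod_le_of_slice' _ _ (m1 (measurableSet_singleton 2)) fun y => gainMeasure_singleton.le
  have h2 : gainMeasure₃ {t | t.2.1 = 2} ≤ 0 :=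
    prod_le_of_slice _ _ (m2 (measurableSet_singleton 2)) fun z =>
      prod_le_of_slice' _ _ (measurable_fst (measurableSet_singleton 2)) fun y =>
        gainMeasure_singleton.le
  have h3 : gainMeasure₃ {t | t.2.2 = 2} ≤ 0 :=
    prod_le_of_slice _ _ (m3 (measurableSet_singleton 2)) fun z =>
      prod_le_of_slice _ _ (measurable_snd (measurableSet_singleton 2)) fun y =>
        gainMeasure_singleton.le
  exact measure_union_null (le_antisymm h1 zero_le)
    (measure_union_null (le_antisymm h2 zero_le) (le_antisymm h3 zero_le))

/-- The Toeplitz matrix of a gain in `(1,2)` has unit diagonal, so it preserves the leading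
entry. -/
lemma mulVec_lead {n : ℕ} {x : ℝ} (hx : x ∈ Set.Ioo (1:ℝ) 2) {a : Fin n → ZMod 2} {v : Fin n}
    (hlt : ∀ j < v, a j = 0) : (Gmat n x *ᵥ a) v = a v := by
  rw [Gmat_mulVec_split x le_rfl hlt]
  simp [binDigit_zero hx]

lemma card_interval_gt_le {n : ℕ} (v : Fin n) (P : Fin n → Prop) [DecidablePred P] (l u : ℕ)
    (h : ∀ i, P i → l ≤ (i : ℕ) ∧ (i : ℕ) < u) :
    (Finset.univ.filter fun i => v < i ∧ P i).card ≤ u - max l (v + 1) := by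
  rw [← Nat.card_Ico, ← Finset.card_map Fin.valEmbedding]
  refine Finset.card_le_card fun k hk => ?_
  simp only [Finset.mem_map, Finset.mem_filter, Finset.mem_univ, true_and] at hk
  obtain ⟨i, ⟨hvi, hi⟩, rfl⟩ := hk
  have h1 := h i hi
  have h2 : (v : ℕ) < i := hvi
  simp only [Fin.valEmbedding_apply, Finset.mem_Ico]
  omega

/-! ### One receiver, and both together -/

/-- Decodability at one receiver. The supports, with indices starting at `0`, are
`[0, rc) ∪ [n - rp, n)` for `a`, `[sb, sb + rb)` for `b` and `[sc, sc + M)` for `c`. Hypotheses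
`h1` and `h2` are the rate constraints with the outage margin `log₂ (32 / δ)` exponentiated. -/
lemma receiver {δ : ℝ} (hδ : δ ∈ Set.Ioc (0:ℝ) 1) (n rc rp rb M sb sc : ℕ) (hsc : sc ≤ sb)
    (h1 : (2:ℝ) ^ (rc + M + rb + rp) * 32 ≤ δ * 2 ^ n)
    (h2 : 0 < M → (2:ℝ) ^ (M + rb + rp + sc) * 32 ≤ δ * 2 ^ n)
    (h3 : 0 < rb → rb + rp + sb ≤ n) :
    ∃ T : Set (ℝ × ℝ × ℝ), MeasurableSet T ∧ gainMeasure₃ T ≤ ENNReal.ofReal (δ / 2) ∧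
      ∀ gc ga gb : ℝ, gc ∈ Set.Ioc (1:ℝ) 2 → ga ∈ Set.Ioc (1:ℝ) 2 → gb ∈ Set.Ioc (1:ℝ) 2 →
        (gc, ga, gb) ∉ T → ∀ a b c : Fin n → ZMod 2,
          (∀ i : Fin n, ¬ ((i : ℕ) < rc ∨ n ≤ (i : ℕ) + rp) → a i = 0) →
          (∀ i : Fin n, ¬ (sb ≤ (i : ℕ) ∧ (i : ℕ) < sb + rb) → b i = 0) →
          (∀ i : Fin n, ¬ (sc ≤ (i : ℕ) ∧ (i : ℕ) < sc + M) → c i = 0) →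
          Gmat n ga *ᵥ a + Gmat n gb *ᵥ b + Gmat n gc *ᵥ c = 0 → a = 0 ∧ b = 0 ∧ c = 0 := by
  obtain ⟨hδ0, hδ1⟩ := hδ
  have hexp : ∀ K : ℕ, (2:ℝ) ^ K * 32 ≤ δ * 2 ^ n → K ≤ n := by
    intro K hK
    have : (2:ℝ) ^ K ≤ 2 ^ n := by
      have : (0:ℝ) < 2 ^ K := by positivity
      have : (0:ℝ) < 2 ^ n := by positivity
      nlinarith
    exact (pow_le_pow_iff_right₀ (by norm_num : (1:ℝ) < 2)).1 this
  have h1n := hexp _ h1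
  have h2n : 0 < M → _ := fun h => hexp _ (h2 h)
  let A : Fin n → Prop := fun i => (i : ℕ) < rc ∨ n ≤ (i : ℕ) + rp
  let B : Fin n → Prop := fun i => sb ≤ (i : ℕ) ∧ (i : ℕ) < sb + rb
  let C : Fin n → Prop := fun i => sc ≤ (i : ℕ) ∧ (i : ℕ) < sc + M
  let _ : DecidablePred A := fun i => by dsimp only [A]; infer_instance
  let _ : DecidablePred B := fun i => by dsimp only [B]; infer_instance
  let _ : DecidablePred C := fun i => by dsimp only [C]; infer_instance
  let F : ZMod 2 → ZMod 2 → ZMod 2 → Fin n →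
      Finset ((Fin n → ZMod 2) × (Fin n → ZMod 2) × (Fin n → ZMod 2)) :=
    fun ta tb tc v => leadVec A v ta ×ˢ leadVec B v tb ×ˢ leadVec C v tc
  have cardF : ∀ ta tb tc v, (F ta tb tc v).card =
      2 ^ ((Finset.univ.filter fun i => v < i ∧ A i).card +
        ((Finset.univ.filter fun i => v < i ∧ B i).card +
          (Finset.univ.filter fun i => v < i ∧ C i).card)) := by
    intro ta tb tc v
    simp only [F, Finset.card_product, card_leadVec, pow_add]
  have cA : ∀ v : Fin n, (Finset.univ.filter fun i => v < i ∧ A i).card ≤ (rc - (v + 1)) + rp := by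
    intro v
    have e : (Finset.univ.filter fun i => v < i ∧ A i) =
        (Finset.univ.filter fun i : Fin n => v < i ∧ (i : ℕ) < rc) ∪
          (Finset.univ.filter fun i : Fin n => v < i ∧ n ≤ (i : ℕ) + rp) := by
      ext i; simp [A, and_or_left]
    have b1 := card_interval_gt_le v (fun i : Fin n => (i : ℕ) < rc) 0 rc fun i hi => ⟨by omega, hi⟩
    have b2 := card_interval_gt_le v (fun i : Fin n => n ≤ (i : ℕ) + rp) (n - rp) n
      fun i hi => ⟨by omega, i.2⟩
    rw [e]
    refine (Finset.card_union_le _ _).trans ?_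
    omega
  have cB : ∀ v : Fin n, (Finset.univ.filter fun i => v < i ∧ B i).card ≤
      (sb + rb) - max sb (v + 1) := fun v => card_interval_gt_le v B _ _ fun i hi => hi
  have cC : ∀ v : Fin n, (Finset.univ.filter fun i => v < i ∧ C i).card ≤
      (sc + M) - max sc (v + 1) := fun v => card_interval_gt_le v C _ _ fun i hi => hi
  -- `Txy` collects the gains for which a triple with `x` and `y` the two leading vectors is a
  -- solution; it ranges over leading indices common to the two supports.
  let Tab : Set (ℝ × ℝ × ℝ) := ⋃ v ∈ Finset.univ.filter fun v => A v ∧ B v,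
    ⋃ q ∈ F 1 1 0 v, badEvent q
  let Tac : Set (ℝ × ℝ × ℝ) := ⋃ v ∈ Finset.univ.filter fun v => A v ∧ C v,
    ⋃ q ∈ F 1 0 1 v, badEvent q
  let Tbc : Set (ℝ × ℝ × ℝ) := ⋃ v ∈ Finset.univ.filter fun v => B v ∧ C v,
    ⋃ q ∈ F 0 1 1 v, badEvent q
  have hab : gainMeasure₃ Tab ≤ ENNReal.ofReal (δ / 32) := by
    refine pattern_le hδ0.le _ sb _ ?_ ?_
    · intro v _ q hq
      simp only [F, Finset.mem_product] at hq
      exact Or.inl (lead_of_mem_leadVec hq.1)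
    · intro v hv
      obtain ⟨hA, hB⟩ := (Finset.mem_filter.1 hv).2
      have := cA v; have := cB v; have := cC v
      simp only [A, B] at hA hB
      refine ⟨hB.1, _, cardF _ _ _ v, _, h1, ?_⟩
      -- By `h3` the block `[n - rp, n)` of `a` lies after the support of `b`, so `v < rc`.
      omega
  have hac : gainMeasure₃ Tac ≤ ENNReal.ofReal (δ / 32) := by
    refine pattern_le hδ0.le _ sc _ ?_ ?_
    · intro v _ q hq
      simp only [F, Finset.mem_product] at hq
      exact Or.inl (lead_of_mem_leadVec hq.1)
    · intro v hv
      obtain ⟨hA, hC⟩ := (Finset.mem_filter.1 hv).2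
      have := cA v; have := cB v; have := cC v
      simp only [A, C] at hA hC
      refine ⟨hC.1, _, cardF _ _ _ v, _, h1, ?_⟩
      -- By `h2` the block `[n - rp, n)` of `a` lies after the support of `c`, so `v < rc`.
      omega
  have hbc : gainMeasure₃ Tbc ≤ ENNReal.ofReal (δ / 32) := by
    refine pattern_le hδ0.le _ sb _ ?_ ?_
    · intro v _ q hq
      simp only [F, Finset.mem_product] at hq
      exact Or.inr (lead_of_mem_leadVec hq.2.1)
    · intro v hv
      obtain ⟨hB, hC⟩ := (Finset.mem_filter.1 hv).2
      have := cA v; have := cB v; have := cC v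
      simp only [B, C] at hB hC
      refine ⟨hB.1, _, cardF _ _ _ v, ?_⟩
      -- Beyond the first block of `a`, the sharper constraint not involving `rc` is needed.
      rcases le_or_gt ((v : ℕ) + 1) rc with hv' | hv'
      · exact ⟨_, h1, by omega⟩
      · exact ⟨_, h2 (by omega), by omega⟩
  refine ⟨{t | t.1 = 2 ∨ t.2.1 = 2 ∨ t.2.2 = 2} ∪ (Tab ∪ (Tac ∪ Tbc)), ?_, ?_, ?_⟩
  · have mE : MeasurableSet {t : ℝ × ℝ × ℝ | t.1 = 2 ∨ t.2.1 = 2 ∨ t.2.2 = 2} := by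
      have m1 : Measurable fun t : ℝ × ℝ × ℝ => t.1 := by fun_prop
      have m2 : Measurable fun t : ℝ × ℝ × ℝ => t.2.1 := by fun_prop
      have m3 : Measurable fun t : ℝ × ℝ × ℝ => t.2.2 := by fun_prop
      exact (m1 (measurableSet_singleton 2)).union
        ((m2 (measurableSet_singleton 2)).union (m3 (measurableSet_singleton 2)))
    have mT : ∀ (V : Finset (Fin n)) (G : Fin n →
        Finset ((Fin n → ZMod 2) × (Fin n → ZMod 2) × (Fin n → ZMod 2))),
        MeasurableSet (⋃ v ∈ V, ⋃ q ∈ G v, badEvent q) := fun V G =>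
      V.measurableSet_biUnion fun v _ => (G v).measurableSet_biUnion fun q _ =>
        measurableSet_badEvent q
    exact mE.union ((mT _ _).union ((mT _ _).union (mT _ _)))
  · calc _ ≤ 0 + (ENNReal.ofReal (δ / 32) + (ENNReal.ofReal (δ / 32) + ENNReal.ofReal (δ / 32))) :=
          (measure_union_le _ _).trans (add_le_add gainMeasure₃_edge.le
            ((measure_union_le _ _).trans (add_le_add hab
              ((measure_union_le _ _).trans (add_le_add hac hbc)))))
      _ ≤ _ := by
          rw [zero_add, ← ENNReal.ofReal_add (by positivity) (by positivity),
            ← ENNReal.ofReal_add (by positivity) (by positivity)]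
          exact ENNReal.ofReal_le_ofReal (by linarith)
  · intro gc ga gb hgc hga hgb hT a b c ha hb hc heq
    simp only [Set.mem_union, not_or] at hT
    obtain ⟨hE, hTab, hTac, hTbc⟩ := hT
    change ¬ (gc = 2 ∨ ga = 2 ∨ gb = 2) at hE
    push Not at hE
    have hgc' : gc ∈ Set.Ioo (1:ℝ) 2 := ⟨hgc.1, lt_of_le_of_ne hgc.2 hE.1⟩
    have hga' : ga ∈ Set.Ioo (1:ℝ) 2 := ⟨hga.1, lt_of_le_of_ne hga.2 hE.2.1⟩
    have hgb' : gb ∈ Set.Ioo (1:ℝ) 2 := ⟨hgb.1, lt_of_le_of_ne hgb.2 hE.2.2⟩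
    -- If all entries before `v` vanish, so do those at `v`, since otherwise the gains are in `T`.
    have main : ∀ v : Fin n, a v = 0 ∧ b v = 0 ∧ c v = 0 := by
      intro v
      induction v using WellFoundedLT.induction with
      | _ v ih =>
        have hla : ∀ j < v, a j = 0 := fun j hj => (ih j hj).1
        have hlb : ∀ j < v, b j = 0 := fun j hj => (ih j hj).2.1
        have hlc : ∀ j < v, c j = 0 := fun j hj => (ih j hj).2.2
        have hrow := congrFun heq v
        simp only [Pi.add_apply, Pi.zero_apply, mulVec_lead hga' hla, mulVec_lead hgb' hlb,
          mulVec_lead hgc' hlc] at hrow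
        have hcases : ∀ x y z : ZMod 2, x + y + z = 0 → (x = 0 ∧ y = 0 ∧ z = 0) ∨
            (x = 1 ∧ y = 1 ∧ z = 0) ∨ (x = 1 ∧ y = 0 ∧ z = 1) ∨ (x = 0 ∧ y = 1 ∧ z = 1) := by
          decide
        have hA : a v = 1 → A v := fun h => by
          by_contra h'; rw [ha v h'] at h; exact zero_ne_one h
        have hB : b v = 1 → B v := fun h => by
          by_contra h'; rw [hb v h'] at h; exact zero_ne_one h
        have hC : c v = 1 → C v := fun h => by
          by_contra h'; rw [hc v h'] at h; exact zero_ne_one h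
        have hF : (a, b, c) ∈ F (a v) (b v) (c v) v := by
          simp only [F, Finset.mem_product]
          exact ⟨mem_leadVec ha hla, mem_leadVec hb hlb, mem_leadVec hc hlc⟩
        rcases hcases _ _ _ hrow with h | ⟨x, y, z⟩ | ⟨x, y, z⟩ | ⟨x, y, z⟩
        · exact h
        · rw [x, y, z] at hF
          exact absurd (Set.mem_biUnion (Finset.mem_coe.2 (Finset.mem_filter.2
            ⟨Finset.mem_univ v, hA x, hB y⟩)) (Set.mem_biUnion (Finset.mem_coe.2 hF) heq)) hTab
        · rw [x, y, z] at hF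
          exact absurd (Set.mem_biUnion (Finset.mem_coe.2 (Finset.mem_filter.2
            ⟨Finset.mem_univ v, hA x, hC z⟩)) (Set.mem_biUnion (Finset.mem_coe.2 hF) heq)) hTac
        · rw [x, y, z] at hF
          exact absurd (Set.mem_biUnion (Finset.mem_coe.2 (Finset.mem_filter.2
            ⟨Finset.mem_univ v, hB y, hC z⟩)) (Set.mem_biUnion (Finset.mem_coe.2 hF) heq)) hTbc
    exact ⟨funext fun v => (main v).1, funext fun v => (main v).2.1, funext fun v => (main v).2.2⟩

lemma pow_le_of_le_sub_logb {δ : ℝ} (hδ : 0 < δ) {K n : ℕ}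
    (h : (K : ℝ) ≤ n - Real.logb 2 (32 / δ)) : (2:ℝ) ^ K * 32 ≤ δ * 2 ^ n := by
  have h' : Real.logb 2 (32 / δ) ≤ (n : ℝ) - K := by linarith
  rw [Real.logb_le_iff_le_rpow (by norm_num) (by positivity), Real.rpow_sub (by norm_num),
    Real.rpow_natCast, Real.rpow_natCast, div_le_div_iff₀ hδ (by positivity)] at h'
  linarith

/-- Lemma 1 of the paper (decodability of the bit allocation of
the interference-alignment scheme for the lower-triangular deterministic
X-channel, outside an outage set of measure at most `δ`). -/
theorem stmt_10 (δ : ℝ) (hδ : δ ∈ Set.Ioc (0:ℝ) 1)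
    (n11 n12 n21 n22 : ℕ) (hN : max n12 n21 ≤ min n11 n22)
    (R11P R11C R12 R21 R22P R22C : ℕ)
    (ha : (R11C : ℝ) + (max R21 R22C : ℕ) + R12 + R11P ≤ (n11 : ℝ) - Real.logb 2 (32 / δ))
    (hb : 0 < max R21 R22C →
      ((max R21 R22C : ℕ) : ℝ) + R12 + R11P ≤ (n12 : ℝ) - Real.logb 2 (32 / δ))
    (hc : 0 < R12 → (R12 : ℝ) + R11P ≤ (n12 : ℝ) + n21 - n22)
    (hd : (R22C : ℝ) + (max R12 R11C : ℕ) + R21 + R22P ≤ (n22 : ℝ) - Real.logb 2 (32 / δ))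
    (he : 0 < max R12 R11C →
      ((max R12 R11C : ℕ) : ℝ) + R21 + R22P ≤ (n21 : ℝ) - Real.logb 2 (32 / δ))
    (hf : 0 < R21 → (R21 : ℝ) + R22P ≤ (n12 : ℝ) + n21 - n11) :
    ∃ B : Set (ℝ × ℝ × ℝ × ℝ × ℝ × ℝ),
      B ⊆ {g | g.1 ∈ Set.Ioc (1:ℝ) 2 ∧ g.2.1 ∈ Set.Ioc (1:ℝ) 2 ∧
        g.2.2.1 ∈ Set.Ioc (1:ℝ) 2 ∧ g.2.2.2.1 ∈ Set.Ioc (1:ℝ) 2 ∧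
        g.2.2.2.2.1 ∈ Set.Ioc (1:ℝ) 2 ∧ g.2.2.2.2.2 ∈ Set.Ioc (1:ℝ) 2} ∧
      volume B ≤ ENNReal.ofReal δ ∧
      ∀ g10 g11 g12 g20 g21 g22 : ℝ,
        g10 ∈ Set.Ioc (1:ℝ) 2 → g11 ∈ Set.Ioc (1:ℝ) 2 → g12 ∈ Set.Ioc (1:ℝ) 2 →
        g20 ∈ Set.Ioc (1:ℝ) 2 → g21 ∈ Set.Ioc (1:ℝ) 2 → g22 ∈ Set.Ioc (1:ℝ) 2 →
        (g10, g11, g12, g20, g21, g22) ∉ B →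
        (∀ a b c : Fin n11 → ZMod 2,
          (∀ i : Fin n11,
            ¬(((i : ℕ) + 1 : ℤ) ≤ (R11C : ℤ) ∨
                (n11 : ℤ) - (R11P : ℤ) + 1 ≤ ((i : ℕ) + 1 : ℤ)) → a i = 0) →
          (∀ i : Fin n11,
            ¬((n11 : ℤ) - ((n12 : ℤ) + n21 - n22) + 1 ≤ ((i : ℕ) + 1 : ℤ) ∧
                ((i : ℕ) + 1 : ℤ) ≤ (n11 : ℤ) - ((n12 : ℤ) + n21 - n22) + R12) → b i = 0) →
          (∀ i : Fin n11,
            ¬((n11 : ℤ) - (n12 : ℤ) + 1 ≤ ((i : ℕ) + 1 : ℤ) ∧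
                ((i : ℕ) + 1 : ℤ) ≤ (n11 : ℤ) - (n12 : ℤ) + (max R21 R22C : ℕ)) → c i = 0) →
          Gmat n11 g11 *ᵥ a + Gmat n11 g12 *ᵥ b + Gmat n11 g10 *ᵥ c = 0 →
          a = 0 ∧ b = 0 ∧ c = 0) ∧
        (∀ a b c : Fin n22 → ZMod 2,
          (∀ i : Fin n22,
            ¬(((i : ℕ) + 1 : ℤ) ≤ (R22C : ℤ) ∨
                (n22 : ℤ) - (R22P : ℤ) + 1 ≤ ((i : ℕ) + 1 : ℤ)) → a i = 0) →
          (∀ i : Fin n22,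
            ¬((n22 : ℤ) - ((n12 : ℤ) + n21 - n11) + 1 ≤ ((i : ℕ) + 1 : ℤ) ∧
                ((i : ℕ) + 1 : ℤ) ≤ (n22 : ℤ) - ((n12 : ℤ) + n21 - n11) + R21) → b i = 0) →
          (∀ i : Fin n22,
            ¬((n22 : ℤ) - (n21 : ℤ) + 1 ≤ ((i : ℕ) + 1 : ℤ) ∧
                ((i : ℕ) + 1 : ℤ) ≤ (n22 : ℤ) - (n21 : ℤ) + (max R12 R11C : ℕ)) → c i = 0) →
          Gmat n22 g22 *ᵥ a + Gmat n22 g21 *ᵥ b + Gmat n22 g20 *ᵥ c = 0 →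
          a = 0 ∧ b = 0 ∧ c = 0) := by
  obtain ⟨hδ0, hδ1⟩ := hδ
  have hN' := hN
  simp only [max_le_iff, le_min_iff] at hN'
  obtain ⟨⟨h1211, h1222⟩, h2111, h2122⟩ := hN'
  obtain ⟨T₁, mT₁, hT₁, dec₁⟩ := receiver ⟨hδ0, hδ1⟩ n11 R11C R11P R12 (max R21 R22C)
    (n11 + n22 - n12 - n21) (n11 - n12) (by omega)
    (pow_le_of_le_sub_logb hδ0 (by push_cast at ha ⊢; exact ha))
    (fun h => pow_le_of_le_sub_logb hδ0 (by
      have := hb h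
      rw [Nat.cast_add, Nat.cast_sub h1211]; push_cast at this ⊢; linarith))
    (fun h => by
      have := hc h
      rw [le_sub_iff_add_le] at this
      have : R12 + R11P + n22 ≤ n12 + n21 := by exact_mod_cast this
      omega)
  obtain ⟨T₂, mT₂, hT₂, dec₂⟩ := receiver ⟨hδ0, hδ1⟩ n22 R22C R22P R21 (max R12 R11C)
    (n11 + n22 - n12 - n21) (n22 - n21) (by omega)
    (pow_le_of_le_sub_logb hδ0 (by push_cast at hd ⊢; exact hd))
    (fun h => pow_le_of_le_sub_logb hδ0 (by
      have := he h
      rw [Nat.cast_add, Nat.cast_sub h2122]; push_cast at this ⊢; linarith))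
    (fun h => by
      have := hf h
      rw [le_sub_iff_add_le] at this
      have : R21 + R22P + n11 ≤ n12 + n21 := by exact_mod_cast this
      omega)
  -- Each receiver sees three of the six independent gains; at receiver two, `g22` multiplies `a`
  -- and `g21` multiplies `b`.
  have id1 : MeasurePreserving (id : ℝ → ℝ) gainMeasure gainMeasure := MeasurePreserving.id _
  have p₁ : MeasurePreserving
      (fun g : ℝ × ℝ × ℝ × ℝ × ℝ × ℝ => (g.1, g.2.1, g.2.2.1))
      (gainMeasure.prod (gainMeasure.prod (gainMeasure.prod gainMeasure₃))) gainMeasure₃ :=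
    id1.prod (id1.prod measurePreserving_fst)
  have p₂ : MeasurePreserving
      (fun g : ℝ × ℝ × ℝ × ℝ × ℝ × ℝ => (g.2.2.2.1, g.2.2.2.2.2, g.2.2.2.2.1))
      (gainMeasure.prod (gainMeasure.prod (gainMeasure.prod gainMeasure₃))) gainMeasure₃ :=
    (id1.prod Measure.measurePreserving_swap).comp
      (measurePreserving_snd.comp (measurePreserving_snd.comp measurePreserving_snd))
  have hvol : gainMeasure.prod (gainMeasure.prod (gainMeasure.prod gainMeasure₃)) =
      (volume : Measure (ℝ × ℝ × ℝ × ℝ × ℝ × ℝ)).restrict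
        (Set.Ioc 1 2 ×ˢ Set.Ioc 1 2 ×ˢ Set.Ioc 1 2 ×ˢ Set.Ioc 1 2 ×ˢ Set.Ioc 1 2 ×ˢ Set.Ioc 1 2) := by
    simp only [gainMeasure₃, gainMeasure, Measure.prod_restrict]
    rfl
  refine ⟨(Set.Ioc 1 2 ×ˢ Set.Ioc 1 2 ×ˢ Set.Ioc 1 2 ×ˢ Set.Ioc 1 2 ×ˢ Set.Ioc 1 2 ×ˢ
      Set.Ioc 1 2) ∩
    ((fun g : ℝ × ℝ × ℝ × ℝ × ℝ × ℝ => (g.1, g.2.1, g.2.2.1)) ⁻¹' T₁ ∪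
      (fun g : ℝ × ℝ × ℝ × ℝ × ℝ × ℝ => (g.2.2.2.1, g.2.2.2.2.2, g.2.2.2.2.1)) ⁻¹' T₂),
    fun g hg => hg.1, ?_, ?_⟩
  · have mC : MeasurableSet ((Set.Ioc 1 2 ×ˢ Set.Ioc 1 2 ×ˢ Set.Ioc 1 2 ×ˢ Set.Ioc 1 2 ×ˢ
        Set.Ioc 1 2 ×ˢ Set.Ioc 1 2 : Set (ℝ × ℝ × ℝ × ℝ × ℝ × ℝ))) := by
      have h : MeasurableSet (Set.Ioc (1:ℝ) 2) := measurableSet_Ioc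
      exact h.prod (h.prod (h.prod (h.prod (h.prod h))))
    rw [Set.inter_comm, ← Measure.restrict_apply' mC, ← hvol]
    refine (measure_union_le _ _).trans ?_
    rw [p₁.measure_preimage mT₁.nullMeasurableSet, p₂.measure_preimage mT₂.nullMeasurableSet]
    refine (add_le_add hT₁ hT₂).trans ?_
    rw [← ENNReal.ofReal_add (by positivity) (by positivity), add_halves]
  · intro g10 g11 g12 g20 g21 g22 h10 h11 h12 h20 h21 h22 hB
    have hB' : (g10, g11, g12) ∉ T₁ ∧ (g20, g22, g21) ∉ T₂ :=
      not_or.1 fun h => hB ⟨⟨h10, h11, h12, h20, h21, h22⟩, h⟩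
    refine ⟨fun a b c ha' hb' hc' => ?_, fun a b c ha' hb' hc' => ?_⟩
    · exact dec₁ g10 g11 g12 h10 h11 h12 hB'.1 a b c (fun i hi => ha' i (by omega))
        (fun i hi => hb' i (by omega)) (fun i hi => hc' i (by omega))
    · exact dec₂ g20 g22 g21 h20 h22 h21 hB'.2 a b c (fun i hi => ha' i (by omega))
        (fun i hi => hb' i (by omega)) (fun i hi => hc' i (by omega))
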